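/- arXiv:math/0304413 — 2 statements merged into one kernel-verified Lean document; each statement's English description precedes it below -/
import Mathlib

section
/- Let G be a finite supersolvable group and χ ∈ Irr(G) with χ(1) > 1. Then the derived length of G/Ker(χ) is at most 2·η(χ) − 1. -/
open scoped Classical BigOperators

/-- Inner product of class functions on a finite group. -/
noncomputable def charInner (G : Type) [Group G] [Fintype G] (φ ψ : G → ℂ) : ℂ :=
  (Fintype.card G : ℂ)⁻¹ * ∑ g : G, φ g * (starRingEnd ℂ) (ψ g)

/-- `χ` is the character of an irreducible complex representation of `G`. -/
def IsIrrChar (G : Type) [Group G] [Fintype G] (χ : G → ℂ) : Prop :=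
  ∃ V : FDRep ℂ G, CategoryTheory.Simple V ∧ V.character = χ

/-- The number of distinct non-principal irreducible constituents of `χ ⬝ conj χ`. -/
noncomputable def etaChar (G : Type) [Group G] [Fintype G] (χ : G → ℂ) : ℕ :=
  Set.ncard {α : G → ℂ | IsIrrChar G α ∧ α ≠ (fun _ => 1) ∧
    charInner G (fun g => χ g * (starRingEnd ℂ) (χ g)) α ≠ 0}

/-- Kernel of a character, as a set. -/
def charKer (G : Type) [Group G] (χ : G → ℂ) : Set G := {g | χ g = χ 1}

/-- Induced character from a subgroup. -/
noncomputable def indChar (K : Type) [Group K] [Fintype K] (H : Subgroup K) (φ : H → ℂ) :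
    K → ℂ := fun k =>
  (Nat.card H : ℂ)⁻¹ * ∑ x : K, if h : x⁻¹ * k * x ∈ H then φ ⟨x⁻¹ * k * x, h⟩ else 0


/-- Derived length of a group. -/
noncomputable def derivedLength (G : Type) [Group G] : ℕ :=
  sInf {n | derivedSeries G n = ⊥}

/-- A finite group is supersolvable if it has a chain of normal subgroups of `G`
from `⊥` to `⊤` with cyclic factors. -/
def IsSupersolvableGroup (G : Type) [Group G] : Prop :=
  ∃ (n : ℕ) (H : Fin (n + 1) → Subgroup G),
    (∀ i, (H i).Normal) ∧ Monotone H ∧ H 0 = ⊥ ∧ H (Fin.last n) = ⊤ ∧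
    ∀ i : Fin n, ∃ g ∈ H i.succ, H i.succ ≤ H i.castSucc ⊔ Subgroup.zpowers g


namespace DLProof

open scoped commutatorElement

variable {G : Type} [Group G] {V : Type} [AddCommGroup V] [Module ℂ V]

/-- Double commutant closure of a subgroup. -/
def clo (ρ : G →* (V →ₗ[ℂ] V)) (Y : Subgroup G) : Subgroup G where
  carrier := {g | ∀ f : V →ₗ[ℂ] V, (∀ y ∈ Y, Commute f (ρ y)) → Commute f (ρ g)}
  one_mem' := by intro f _; simp
  mul_mem' := by
    intro a b ha hb f hf
    rw [map_mul]
    exact (ha f hf).mul_right (hb f hf)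
  inv_mem' := by
    intro a ha f hf
    have h := ha f hf
    have h1 : ρ a * ρ a⁻¹ = 1 := by rw [← map_mul]; simp
    have h2 : ρ a⁻¹ * ρ a = 1 := by rw [← map_mul]; simp
    show f * ρ a⁻¹ = ρ a⁻¹ * f
    calc f * ρ a⁻¹ = ρ a⁻¹ * ρ a * f * ρ a⁻¹ := by rw [h2, one_mul]
      _ = ρ a⁻¹ * (ρ a * f) * ρ a⁻¹ := by simp only [mul_assoc]
      _ = ρ a⁻¹ * (f * ρ a) * ρ a⁻¹ := by rw [h.eq]
      _ = ρ a⁻¹ * f * (ρ a * ρ a⁻¹) := by simp only [mul_assoc]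
      _ = ρ a⁻¹ * f := by rw [h1, mul_one]

theorem mem_clo {ρ : G →* (V →ₗ[ℂ] V)} {Y : Subgroup G} {g : G} :
    g ∈ clo ρ Y ↔ ∀ f : V →ₗ[ℂ] V, (∀ y ∈ Y, Commute f (ρ y)) → Commute f (ρ g) := Iff.rfl

theorem le_clo (ρ : G →* (V →ₗ[ℂ] V)) (Y : Subgroup G) : Y ≤ clo ρ Y :=
  fun y hy _ hf => hf y hy

theorem rho_mul_inv (ρ : G →* (V →ₗ[ℂ] V)) (a : G) : ρ a * ρ a⁻¹ = 1 := by
  rw [← map_mul]; simp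

theorem rho_inv_mul (ρ : G →* (V →ₗ[ℂ] V)) (a : G) : ρ a⁻¹ * ρ a = 1 := by
  rw [← map_mul]; simp

/-- conjugation fixes iff commute -/
theorem conj_eq_iff (ρ : G →* (V →ₗ[ℂ] V)) (a : G) (f : V →ₗ[ℂ] V) :
    ρ a * f * ρ a⁻¹ = f ↔ Commute f (ρ a) := by
  constructor
  · intro h
    show f * ρ a = ρ a * f
    conv_lhs => rw [← h]
    rw [mul_assoc, rho_inv_mul, mul_one]
  · intro h
    rw [← h.eq, mul_assoc, rho_mul_inv, mul_one]

/-- The closure of a normal subgroup is normal. -/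
theorem clo_normal (ρ : G →* (V →ₗ[ℂ] V)) (Y : Subgroup G) [hY : Y.Normal] :
    (clo ρ Y).Normal := by
  constructor
  intro n hn g f hf
  have h1 : Commute (ρ g⁻¹ * f * ρ g) (ρ n) := by
    apply hn
    intro y hy
    have h2 : Commute f (ρ (g * y * g⁻¹)) := hf _ (hY.conj_mem y hy g)
    rw [← conj_eq_iff] at h2 ⊢
    have : ρ y * (ρ g⁻¹ * f * ρ g) * ρ y⁻¹
        = ρ g⁻¹ * (ρ (g * y * g⁻¹) * f * ρ (g * y * g⁻¹)⁻¹) * ρ g := by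
      simp only [← mul_assoc, ← map_mul]
      simp only [mul_assoc, ← map_mul]
      simp [mul_assoc]
    rw [this, h2]
  rw [← conj_eq_iff] at h1 ⊢
  have : ρ (g * n * g⁻¹) * f * ρ (g * n * g⁻¹)⁻¹
      = ρ g * (ρ n * (ρ g⁻¹ * f * ρ g) * ρ n⁻¹) * ρ g⁻¹ := by
    simp [mul_assoc]
  rw [this, h1]
  simp only [← mul_assoc]
  rw [rho_mul_inv, one_mul, mul_assoc, rho_mul_inv, mul_one]

variable [FiniteDimensional ℂ V]

/-- Maschke: equivariant projection. -/
theorem exists_proj [Finite G] (ρ : G →* (V →ₗ[ℂ] V)) (Y : Subgroup G) (U : Submodule ℂ V)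
    (hU : ∀ y ∈ Y, ∀ u ∈ U, ρ y u ∈ U) :
    ∃ p : V →ₗ[ℂ] V, (∀ y ∈ Y, Commute p (ρ y)) ∧ (∀ v, p v ∈ U) ∧ ∀ u ∈ U, p u = u := by
  have : Fintype Y := Fintype.ofFinite _
  obtain ⟨q, hq⟩ := U.subtype.exists_leftInverse_of_injective U.ker_subtype
  let p0 : V →ₗ[ℂ] V := U.subtype ∘ₗ q
  have hp0 : ∀ v, p0 v ∈ U := fun v => (q v).2
  have hp0' : ∀ u ∈ U, p0 u = u := by
    intro u hu
    have := LinearMap.congr_fun hq ⟨u, hu⟩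
    exact congrArg Subtype.val this
  refine ⟨(Fintype.card Y : ℂ)⁻¹ • ∑ y : Y, ρ y * p0 * ρ (y : G)⁻¹, ?_, ?_, ?_⟩
  · intro z hz
    apply Commute.smul_left
    rw [← conj_eq_iff, Finset.mul_sum, Finset.sum_mul]
    refine Fintype.sum_equiv (Equiv.mulLeft (⟨z, hz⟩ : Y)) _ _ ?_
    intro y
    simp [mul_assoc]
  · intro v
    simp only [LinearMap.smul_apply, LinearMap.sum_apply]
    refine U.smul_mem _ (U.sum_mem fun y _ => ?_)
    exact hU _ y.2 _ (hp0 _)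
  · intro u hu
    simp only [LinearMap.smul_apply, LinearMap.sum_apply]
    have : ∀ y : Y, (ρ y * p0 * ρ (y : G)⁻¹) u = u := by
      intro y
      show ρ y (p0 (ρ (y : G)⁻¹ u)) = u
      rw [hp0' _ (hU _ (Y.inv_mem y.2) _ hu)]
      have := LinearMap.congr_fun (rho_mul_inv ρ (y : G)) u
      simpa using this
    simp only [this, Finset.sum_const, Finset.card_univ, ← Nat.cast_smul_eq_nsmul ℂ, smul_smul]
    rw [inv_mul_cancel₀ (by simp), one_smul]

theorem stable_clo [Finite G] (ρ : G →* (V →ₗ[ℂ] V)) (Y : Subgroup G) (U : Submodule ℂ V)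
    (hU : ∀ y ∈ Y, ∀ u ∈ U, ρ y u ∈ U) : ∀ w ∈ clo ρ Y, ∀ u ∈ U, ρ w u ∈ U := by
  obtain ⟨p, h1, h2, h3⟩ := exists_proj ρ Y U hU
  intro w hw u hu
  have h := hw p h1
  have h4 := LinearMap.congr_fun h.eq u
  simp only [Module.End.mul_apply] at h4
  rw [h3 u hu] at h4
  rw [← h4]
  exact h2 _

/-- existence of a nontrivial eigenvalue -/
theorem exists_eigen [Finite G] (ρ : G →* (V →ₗ[ℂ] V)) (X : Subgroup G) [hX : X.Normal] (y : G)
    (f : V →ₗ[ℂ] V) (hf : ∀ x ∈ X, Commute f (ρ x)) (hfy : ¬ Commute f (ρ y)) :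
    ∃ (μ : ℂ) (a : V →ₗ[ℂ] V), μ ≠ 1 ∧ a ≠ 0 ∧ (∀ x ∈ X, Commute a (ρ x)) ∧
      ρ y * a * ρ y⁻¹ = μ • a := by
  let c : Module.End ℂ (V →ₗ[ℂ] V) :=
    { toFun := fun a => ρ y * a * ρ y⁻¹
      map_add' := by intro a b; simp [mul_add, add_mul]
      map_smul' := by intro m a; simp }
  have hc : ∀ a, c a = ρ y * a * ρ y⁻¹ := fun _ => rfl
  have hcpow : ∀ (n : ℕ) a, (c ^ n) a = ρ (y ^ n) * a * ρ (y ^ n)⁻¹ := by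
    intro n
    induction n with
    | zero => intro a; simp
    | succ n ih =>
      intro a
      rw [pow_succ', Module.End.mul_apply, ih, hc, pow_succ']
      simp [mul_assoc]
  set n := orderOf y with hn
  have hn0 : 0 < n := orderOf_pos y
  have hcn : ∀ a, (c ^ n) a = a := by
    intro a; rw [hcpow, hn, pow_orderOf_eq_one]; simp
  let R : Submodule ℂ (V →ₗ[ℂ] V) :=
    { carrier := {a | (∀ x ∈ X, Commute a (ρ x)) ∧ ∑ i ∈ Finset.range n, (c ^ i) a = 0}
      zero_mem' := by simp
      add_mem' := by
        rintro a b ⟨h1, h2⟩ ⟨h3, h4⟩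
        refine ⟨fun x hx => (h1 x hx).add_left (h3 x hx), ?_⟩
        simp only [map_add, Finset.sum_add_distrib, h2, h4, add_zero]
      smul_mem' := by
        rintro m a ⟨h1, h2⟩
        refine ⟨fun x hx => (h1 x hx).smul_left m, ?_⟩
        simp only [map_smul, ← Finset.smul_sum, h2, smul_zero] }
  have hcX : ∀ a, (∀ x ∈ X, Commute a (ρ x)) → ∀ x ∈ X, Commute (c a) (ρ x) := by
    intro a ha x hx
    have h1 := ha _ (hX.conj_mem x hx y⁻¹)
    rw [← conj_eq_iff] at h1 ⊢
    have : ρ x * c a * ρ x⁻¹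
        = c (ρ (y⁻¹ * x * y⁻¹⁻¹) * a * ρ (y⁻¹ * x * y⁻¹⁻¹)⁻¹) := by
      simp only [hc, ← mul_assoc, ← map_mul]
      simp only [mul_assoc, ← map_mul]
      simp [mul_assoc]
    rw [this, h1]
  have hcR : ∀ a ∈ R, c a ∈ R := by
    rintro a ⟨h1, h2⟩
    refine ⟨hcX a h1, ?_⟩
    have : ∀ i, (c ^ i) (c a) = c ((c ^ i) a) := by
      intro i
      rw [← Module.End.mul_apply, ← Module.End.mul_apply, ← pow_succ, ← pow_succ']
    simp only [this, ← map_sum, h2, map_zero]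
  have hmem : c f - f ∈ R := by
    refine ⟨fun x hx => (hcX f hf x hx).sub_left (hf x hx), ?_⟩
    have : ∀ i, (c ^ i) (c f - f) = (c ^ (i + 1)) f - (c ^ i) f := by
      intro i; rw [map_sub, pow_succ, Module.End.mul_apply]
    simp only [this]
    rw [Finset.sum_range_sub (fun i => (c ^ i) f), hcn]
    simp
  have hne : c f - f ≠ 0 := by
    intro h
    exact hfy ((conj_eq_iff ρ y f).1 (sub_eq_zero.1 h))
  have : Nontrivial R := ⟨⟨⟨_, hmem⟩, 0, fun h => hne (congrArg Subtype.val h)⟩⟩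
  obtain ⟨μ, hμ⟩ := Module.End.exists_eigenvalue (c.restrict hcR)
  obtain ⟨a, ha⟩ := hμ.exists_hasEigenvector
  have ha1 : c a.1 = μ • a.1 := congrArg Subtype.val ha.apply_eq_smul
  have ha0 : a.1 ≠ 0 := fun h => ha.2 (Subtype.ext h)
  refine ⟨μ, a.1, ?_, ha0, a.2.1, ha1⟩
  rintro rfl
  have h2 := a.2.2
  have : ∀ i, (c ^ i) a.1 = a.1 := by
    intro i
    induction i with
    | zero => simp
    | succ i ih => rw [pow_succ', Module.End.mul_apply, ih, ha1, one_smul]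
  simp only [this, Finset.sum_const, Finset.card_range] at h2
  rw [← Nat.cast_smul_eq_nsmul ℂ] at h2
  rcases smul_eq_zero.1 h2 with h | h
  · exact hn0.ne' (by exact_mod_cast h)
  · exact ha0 h

theorem key [Finite G] (ρ : G →* (V →ₗ[ℂ] V)) (X : Subgroup G) [hX : X.Normal] (y : G)
    (W : Subgroup G) (hWy : ∀ w ∈ W, y⁻¹ * (w⁻¹ * y * w) ∈ X)
    (hWc : W ≤ clo ρ (X ⊔ Subgroup.zpowers y)) (hy : y ∈ X ⊔ ⁅W, W⁆)
    (f : V →ₗ[ℂ] V) (hf : ∀ x ∈ X, Commute f (ρ x)) : Commute f (ρ y) := by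
  by_contra hfy
  obtain ⟨μ, a, hμ, ha0, haX, hay⟩ := exists_eigen ρ X y f hf hfy
  let A : Set (V →ₗ[ℂ] V) := {b | b ≠ 0 ∧ (∀ x ∈ X, Commute b (ρ x)) ∧ ρ y * b * ρ y⁻¹ = μ • b}
  obtain ⟨K, ⟨b, hbA, rfl⟩, hmax⟩ := WellFounded.has_min
    (wellFounded_gt (α := Submodule ℂ V)) ((fun b => LinearMap.ker b) '' A)
    ⟨_, ⟨a, ⟨ha0, haX, hay⟩, rfl⟩⟩
  obtain ⟨hb0, hbX, hby⟩ := hbA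
  have hμ0 : μ ≠ 0 := by
    rintro rfl
    rw [zero_smul] at hby
    apply hb0
    have : ρ y⁻¹ * (ρ y * b * ρ y⁻¹) * ρ y = b := by
      simp only [mul_assoc, rho_inv_mul, mul_one]
      rw [← mul_assoc, rho_inv_mul, one_mul]
    rw [← this, hby]; simp
  have hby' : ρ y * b = μ • (b * ρ y) := by
    have := congrArg (· * ρ y) hby
    simpa only [mul_assoc, rho_inv_mul, mul_one, smul_mul_assoc] using this
  -- stability of kernel and range
  have stab : ∀ U : Submodule ℂ V, (∀ x ∈ X, ∀ u ∈ U, ρ x u ∈ U) → (∀ u ∈ U, ρ y u ∈ U) →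
      ∀ w ∈ W, ∀ u ∈ U, ρ w u ∈ U := by
    intro U h1 h2 w hw
    refine stable_clo ρ (X ⊔ Subgroup.zpowers y) U ?_ w (hWc hw)
    intro z hz
    have hle : X ⊔ Subgroup.zpowers y ≤
        { carrier := {g : G | (∀ u ∈ U, ρ g u ∈ U) ∧ ∀ u ∈ U, ρ g⁻¹ u ∈ U}
          one_mem' := by simp
          mul_mem' := by
            rintro g h ⟨hg, hg'⟩ ⟨hh, hh'⟩
            refine ⟨fun u hu => ?_, fun u hu => ?_⟩
            · rw [map_mul]; exact hg _ (hh _ hu)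
            · rw [mul_inv_rev, map_mul]; exact hh' _ (hg' _ hu)
          inv_mem' := by
            rintro g ⟨hg, hg'⟩
            refine ⟨hg', ?_⟩
            simpa using hg : Subgroup G } := by
      refine sup_le ?_ ?_
      · intro x hx
        exact ⟨h1 x hx, h1 _ (X.inv_mem hx)⟩
      · rw [Subgroup.zpowers_le]
        have hpow : ∀ (n : ℕ), ∀ u ∈ U, ρ (y ^ n) u ∈ U := by
          intro n
          induction n with
          | zero => simp
          | succ n ih => intro u hu; rw [pow_succ', map_mul]; exact h2 _ (ih u hu)
        refine ⟨h2, ?_⟩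
        have : y⁻¹ = y ^ (orderOf y - 1) := by
          rw [inv_eq_iff_mul_eq_one, ← pow_succ', Nat.sub_add_cancel (orderOf_pos y),
            pow_orderOf_eq_one]
        rw [this]
        exact hpow _
    exact (hle hz).1
  have hker : ∀ w ∈ W, ∀ u ∈ LinearMap.ker b, ρ w u ∈ LinearMap.ker b := by
    apply stab
    · intro x hx u hu
      have := LinearMap.congr_fun (hbX x hx).eq u
      simp only [Module.End.mul_apply] at this
      rw [LinearMap.mem_ker] at hu ⊢
      rw [this, hu, map_zero]
    · intro u hu
      have := LinearMap.congr_fun hby' u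
      simp only [Module.End.mul_apply, LinearMap.smul_apply] at this
      rw [LinearMap.mem_ker] at hu ⊢
      rw [hu, map_zero] at this
      exact (smul_eq_zero.1 this.symm).resolve_left hμ0
  have hrange : ∀ w ∈ W, ∀ u ∈ LinearMap.range b, ρ w u ∈ LinearMap.range b := by
    apply stab
    · rintro x hx _ ⟨u, rfl⟩
      exact ⟨ρ x u, LinearMap.congr_fun (hbX x hx).eq u⟩
    · rintro _ ⟨u, rfl⟩
      refine ⟨μ • ρ y u, ?_⟩
      have := LinearMap.congr_fun hby' u
      simp only [Module.End.mul_apply, LinearMap.smul_apply] at this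
      rw [map_smul, this]
  have hscal : ∀ w ∈ W, ∃ l : ℂ, ρ w * b * ρ w⁻¹ = l • b := by
    intro w hw
    set b' := ρ w * b * ρ w⁻¹ with hb'
    have hb'X : ∀ x ∈ X, Commute b' (ρ x) := by
      intro x hx
      have h1 := hbX _ (hX.conj_mem x hx w⁻¹)
      rw [← conj_eq_iff] at h1 ⊢
      have : ρ x * b' * ρ x⁻¹
          = ρ w * (ρ (w⁻¹ * x * w⁻¹⁻¹) * b * ρ (w⁻¹ * x * w⁻¹⁻¹)⁻¹) * ρ w⁻¹ := by
        simp only [hb', ← mul_assoc, ← map_mul]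
        simp only [mul_assoc, ← map_mul]
        simp [mul_assoc]
      rw [this, h1]
    have hb'y : ρ y * b' * ρ y⁻¹ = μ • b' := by
      have h1 := hbX _ (hWy w hw)
      rw [← conj_eq_iff] at h1
      have : ρ y * b' * ρ y⁻¹ = ρ w * (ρ y * (ρ (y⁻¹ * (w⁻¹ * y * w)) * b *
          ρ (y⁻¹ * (w⁻¹ * y * w))⁻¹) * ρ y⁻¹) * ρ w⁻¹ := by
        simp only [hb', ← mul_assoc, ← map_mul]
        simp only [mul_assoc, ← map_mul]
        simp [mul_assoc]
      rw [this, h1, hby]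
      simp [hb']
    have hkk : LinearMap.ker b ≤ LinearMap.ker b' := by
      intro v hv
      have h1 := hker _ (W.inv_mem hw) v hv
      rw [LinearMap.mem_ker] at h1 ⊢
      simp [hb', h1]
    have hrr : ∀ v, b' v ∈ LinearMap.range b := by
      intro v
      exact hrange w hw _ ⟨ρ w⁻¹ v, rfl⟩
    -- the induced endomorphism of the range
    let T : LinearMap.range b →ₗ[ℂ] LinearMap.range b :=
      ((LinearMap.ker b).liftQ (b'.codRestrict (LinearMap.range b) hrr) (by
        intro v hv
        have := hkk hv
        rw [LinearMap.mem_ker] at this ⊢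
        exact Subtype.ext this)) ∘ₗ b.quotKerEquivRange.symm.toLinearMap
    have hT : ∀ v, T ⟨b v, v, rfl⟩ = ⟨b' v, hrr v⟩ := by
      intro v
      have : b.quotKerEquivRange.symm ⟨b v, v, rfl⟩ = (LinearMap.ker b).mkQ v := by
        rw [LinearEquiv.symm_apply_eq]
        rfl
      simp only [T, LinearMap.comp_apply, LinearEquiv.coe_coe, this]
      rfl
    have hnt : Nontrivial (LinearMap.range b) := by
      rw [Submodule.nontrivial_iff_ne_bot]
      intro h
      exact hb0 (LinearMap.range_eq_bot.1 h)
    obtain ⟨l, hl⟩ := Module.End.exists_eigenvalue T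
    obtain ⟨⟨_, v, rfl⟩, hv1⟩ := hl.exists_hasEigenvector
    have hv2 : b v ≠ 0 := fun h => hv1.2 (Subtype.ext h)
    have hv3 : b' v = l • b v := by
      have := hv1.apply_eq_smul
      rw [hT] at this
      exact congrArg Subtype.val this
    refine ⟨l, ?_⟩
    by_contra hne
    apply hmax (LinearMap.ker (b' - l • b))
    · refine ⟨b' - l • b, ⟨sub_ne_zero.2 hne, ?_, ?_⟩, rfl⟩
      · intro x hx
        exact (hb'X x hx).sub_left ((hbX x hx).smul_left l)
      · rw [mul_sub, sub_mul, hb'y, smul_sub, mul_smul_comm, smul_mul_assoc, hby, smul_comm]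
    · show LinearMap.ker b < LinearMap.ker (b' - l • b)
      refine lt_of_le_of_ne ?_ ?_
      · intro u hu
        have h1 := hkk hu
        rw [LinearMap.mem_ker] at h1 hu ⊢
        simp [h1, hu]
      · intro h
        apply hv2
        rw [← LinearMap.mem_ker, h, LinearMap.mem_ker]
        simp [hv3]
  -- final contradiction
  let N : Subgroup G :=
    { carrier := {g | ρ g * b * ρ g⁻¹ = b}
      one_mem' := by simp
      mul_mem' := by
        intro g h hg hh
        simp only [Set.mem_ofPred_eq] at hg hh ⊢
        calc ρ (g * h) * b * ρ (g * h)⁻¹ = ρ g * (ρ h * b * ρ h⁻¹) * ρ g⁻¹ := by simp [mul_assoc]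
          _ = b := by rw [hh, hg]
      inv_mem' := by
        intro g hg
        simp only [Set.mem_ofPred_eq] at hg ⊢
        rw [conj_eq_iff] at hg ⊢
        exact (clo ρ (Subgroup.zpowers g)).inv_mem (le_clo ρ _ (Subgroup.mem_zpowers g)) b (by
          intro z hz
          obtain ⟨k, rfl⟩ := hz
          have := ((conj_eq_iff ρ g b).2 hg)
          have hz : ∀ n : ℕ, Commute b (ρ (g ^ n)) := fun n => by
            rw [map_pow]; exact hg.pow_right n
          obtain ⟨n, hn⟩ : ∃ n : ℕ, g ^ n = g ^ k := by
            have : g ^ k ∈ Subgroup.zpowers g := ⟨k, rfl⟩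
            rw [← mem_powers_iff_mem_zpowers] at this
            exact this
          show Commute b (ρ (g ^ k))
          rw [← hn]; exact hz n) }
  have hN : X ⊔ ⁅W, W⁆ ≤ N := by
    refine sup_le ?_ ?_
    · intro x hx
      exact (conj_eq_iff ρ x b).2 (hbX x hx)
    · rw [Subgroup.commutator_le]
      intro g hg h hh
      obtain ⟨l, hl⟩ := hscal g hg
      obtain ⟨m, hm⟩ := hscal h hh
      have aux : ∀ (z : G) (l : ℂ), ρ z * b * ρ z⁻¹ = l • b →
          ∃ l', l * l' = 1 ∧ ρ z⁻¹ * b * ρ z = l' • b := by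
        intro z l hz
        have hl0 : l ≠ 0 := by
          rintro rfl
          rw [zero_smul] at hz
          apply hb0
          have : ρ z⁻¹ * (ρ z * b * ρ z⁻¹) * ρ z = b := by
            simp only [mul_assoc, rho_inv_mul, mul_one]
            rw [← mul_assoc, rho_inv_mul, one_mul]
          rw [← this, hz]; simp
        refine ⟨l⁻¹, mul_inv_cancel₀ hl0, ?_⟩
        have : ρ z⁻¹ * (ρ z * b * ρ z⁻¹) * ρ z = b := by
          simp only [mul_assoc, rho_inv_mul, mul_one]
          rw [← mul_assoc, rho_inv_mul, one_mul]
        rw [hz] at this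
        rw [← this]
        conv_rhs => rw [mul_smul_comm, smul_mul_assoc]
        rw [smul_smul, inv_mul_cancel₀ hl0, one_smul, this]
      obtain ⟨l', hl1, hl2⟩ := aux g l hl
      obtain ⟨m', hm1, hm2⟩ := aux h m hm
      show ρ ⁅g, h⁆ * b * ρ ⁅g, h⁆⁻¹ = b
      have : ρ ⁅g, h⁆ * b * ρ ⁅g, h⁆⁻¹ =
          ρ g * (ρ h * (ρ g⁻¹ * (ρ h⁻¹ * b * ρ h) * ρ g) * ρ h⁻¹) * ρ g⁻¹ := by
        simp [commutatorElement_def, mul_assoc]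
      rw [this, hm2]
      simp only [mul_smul_comm, smul_mul_assoc, hl2, hm, hl, smul_smul]
      have : m' * l' * m * l = 1 := by
        calc m' * l' * m * l = (m * m') * (l * l') := by ring
          _ = 1 := by rw [hl1, hm1, one_mul]
      rw [this, one_smul]
  have h1 : ρ y * b * ρ y⁻¹ = b := hN hy
  rw [hby] at h1
  have : (μ - 1) • b = 0 := by rw [sub_smul, one_smul, h1, sub_self]
  rcases smul_eq_zero.1 this with h | h
  · exact hμ (sub_eq_zero.1 h)
  · exact hb0 h


open scoped ComplexOrder in
theorem trace_inv [Fintype G] (ρ : G →* (V →ₗ[ℂ] V)) (h : G) :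
    LinearMap.trace ℂ V (ρ h⁻¹) = (starRingEnd ℂ) (LinearMap.trace ℂ V (ρ h)) := by
  let b := Module.finBasis ℂ V
  let m : G → Matrix _ _ ℂ := fun g => LinearMap.toMatrix b b (ρ g)
  have hm : ∀ g k, m (g * k) = m g * m k := by
    intro g k
    simp only [m, map_mul, LinearMap.toMatrix_mul]
  have hm1 : m 1 = 1 := by
    simp only [m, map_one, LinearMap.toMatrix_one]
  let P : Matrix _ _ ℂ := ∑ g : G, (m g).conjTranspose * m g
  have hP : P.PosDef := by
    have : P = (m 1).conjTranspose * m 1 +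
        ∑ g ∈ Finset.univ.erase (1 : G), (m g).conjTranspose * m g :=
      (Finset.add_sum_erase _ _ (Finset.mem_univ 1)).symm
    rw [this, hm1]
    refine Matrix.PosDef.add_posSemidef ?_ ?_
    · simpa using Matrix.PosDef.one
    · exact Matrix.posSemidef_sum _ fun g _ => Matrix.posSemidef_conjTranspose_mul_self _
  have hdet : IsUnit P.det := (Matrix.isUnit_iff_isUnit_det _).1 hP.isUnit
  have hinv : (m h).conjTranspose * P * m h = P := by
    simp only [P, Finset.mul_sum, Finset.sum_mul]
    refine Fintype.sum_equiv (Equiv.mulRight h) _ _ ?_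
    intro g
    simp [hm, Matrix.conjTranspose_mul, Matrix.mul_assoc]
  have h2 : (m h).conjTranspose * P = P * m h⁻¹ := by
    have h3 : m h * m h⁻¹ = 1 := by rw [← hm]; simp [hm1]
    calc (m h).conjTranspose * P = (m h).conjTranspose * P * (m h * m h⁻¹) := by rw [h3, mul_one]
      _ = ((m h).conjTranspose * P * m h) * m h⁻¹ := by simp only [Matrix.mul_assoc]
      _ = P * m h⁻¹ := by rw [hinv]
  have h4 : (m h).conjTranspose = P * m h⁻¹ * P⁻¹ := by
    rw [← h2, Matrix.mul_assoc, Matrix.mul_nonsing_inv _ hdet, mul_one]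
  have h5 : (m h).conjTranspose.trace = (m h⁻¹).trace := by
    rw [h4, Matrix.trace_mul_comm, ← Matrix.mul_assoc, Matrix.nonsing_inv_mul _ hdet, one_mul]
  rw [LinearMap.trace_eq_matrix_trace ℂ b, LinearMap.trace_eq_matrix_trace ℂ b]
  show (m h⁻¹).trace = star (m h).trace
  rw [← h5, Matrix.trace_conjTranspose]

theorem irr_orth [Fintype G] (A B : FDRep ℂ G) (hA : CategoryTheory.Simple A)
    (hB : CategoryTheory.Simple B) :
    (Nat.card G : ℂ)⁻¹ * ∑ g : G, A.character g * B.character g⁻¹ =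
      if Nonempty (A ≅ B) then 1 else 0 := by
  have : Invertible (Nat.card G : ℂ) := invertibleOfNonzero (by simp)
  have := FDRep.char_orthonormal A B
  convert this

theorem irr_finite [Fintype G] : {α : G → ℂ | IsIrrChar G α}.Finite := by
  have : LinearIndependent ℂ (fun α : {α : G → ℂ | IsIrrChar G α} => (α : G → ℂ)) := by
    rw [linearIndependent_iff']
    intro s c hc β hβ
    obtain ⟨B, hB, hBβ⟩ := β.2
    have h1 : (Nat.card G : ℂ)⁻¹ * ∑ g : G, (∑ α ∈ s, c α • (α : G → ℂ)) g * B.character g⁻¹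
        = c β := by
      have : ∀ α ∈ s, (Nat.card G : ℂ)⁻¹ * ∑ g : G, (α : G → ℂ) g * B.character g⁻¹ =
          if α = β then 1 else 0 := by
        intro α _
        obtain ⟨A, hA, hAα⟩ := α.2
        rw [← hAα, irr_orth A B hA hB]
        split_ifs with h1 h2 h2
        · rfl
        · exfalso
          obtain ⟨i⟩ := h1
          apply h2
          apply Subtype.ext
          rw [← hAα, ← hBβ, FDRep.char_iso i]
        · exfalso
          have h3 := irr_orth B B hB hB
          have h4 := irr_orth A B hA hB
          rw [if_pos ⟨CategoryTheory.Iso.refl _⟩] at h3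
          rw [if_neg h1, hAα, h2, ← hBβ, h3] at h4
          exact one_ne_zero h4
        · rfl
      calc _ = ∑ α ∈ s, c α * ((Nat.card G : ℂ)⁻¹ * ∑ g : G, (α : G → ℂ) g * B.character g⁻¹) := by
            simp only [Finset.sum_apply, Pi.smul_apply, smul_eq_mul, Finset.sum_mul,
              Finset.mul_sum]
            rw [Finset.sum_comm]
            refine Finset.sum_congr rfl fun α _ => Finset.sum_congr rfl fun g _ => ?_
            ring
        _ = ∑ α ∈ s, c α * (if α = β then 1 else 0) :=
            Finset.sum_congr rfl fun α hα => by rw [this α hα]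
        _ = c β := by simp [hβ]
    rw [hc] at h1
    simpa using h1.symm
  exact this.setFinite

/-- constituents of `χ * conj χ` with `X` in the kernel -/
def Sset (G : Type) [Group G] [Fintype G] (χ : G → ℂ) (X : Subgroup G) : Set (G → ℂ) :=
  {α | ∃ A : FDRep ℂ G, CategoryTheory.Simple A ∧ A.character = α ∧ α ≠ (fun _ => 1) ∧
    charInner G (fun g => χ g * (starRingEnd ℂ) (χ g)) α ≠ 0 ∧ ∀ x ∈ X, A.ρ x = 1}

theorem Sset_finite [Fintype G] (χ : G → ℂ) (X : Subgroup G) : (Sset G χ X).Finite :=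
  irr_finite.subset fun _ ⟨A, h1, h2, _⟩ => ⟨A, h1, h2⟩

theorem Sset_anti [Fintype G] (χ : G → ℂ) {X Y : Subgroup G} (h : X ≤ Y) :
    Sset G χ Y ⊆ Sset G χ X :=
  fun _ ⟨A, h1, h2, h3, h4, h5⟩ => ⟨A, h1, h2, h3, h4, fun x hx => h5 x (h hx)⟩

theorem Sset_ncard_le [Fintype G] (χ : G → ℂ) (X : Subgroup G) :
    (Sset G χ X).ncard ≤ etaChar G χ := by
  refine Set.ncard_le_ncard ?_ (irr_finite.subset fun _ h => h.1)
  rintro α ⟨A, h1, h2, h3, h4, -⟩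
  exact ⟨⟨A, h1, h2⟩, h3, h4⟩

theorem exists_simple [Fintype G] (W : FDRep ℂ G) (X : Subgroup G) [hX : X.Normal] (y : G)
    (f : W →ₗ[ℂ] W) (hf : ∀ x ∈ X, Commute f (W.ρ x)) (hfy : ¬ Commute f (W.ρ y)) :
    ∃ A : FDRep ℂ G, CategoryTheory.Simple A ∧
      charInner G (fun g => W.character g * (starRingEnd ℂ) (W.character g)) A.character ≠ 0 ∧
      (∀ x ∈ X, A.ρ x = 1) ∧ A.ρ y ≠ 1 := by
  let L : Representation ℂ G (W →ₗ[ℂ] W) := Representation.linHom W.ρ W.ρ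
  have hL : ∀ g a, L g a = W.ρ g * a * W.ρ g⁻¹ := by
    intro g a
    rfl
  let F : Set (Submodule ℂ (W →ₗ[ℂ] W)) := {U | (∀ g, ∀ a ∈ U, L g a ∈ U) ∧
    (∀ a ∈ U, ∀ x ∈ X, L x a = a) ∧ ∃ a ∈ U, L y a ≠ a}
  have hF : F.Nonempty := by
    refine ⟨{ carrier := {a | ∀ x ∈ X, L x a = a}
              zero_mem' := by simp
              add_mem' := by
                intro a b ha hb x hx
                rw [map_add, ha x hx, hb x hx]
              smul_mem' := by
                intro c a ha x hx
                rw [map_smul, ha x hx] }, ?_, ?_, ?_⟩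
    · intro g a ha x hx
      have h1 := ha _ (hX.conj_mem x hx g⁻¹)
      rw [← Module.End.mul_apply, ← map_mul]
      have : x * g = g * (g⁻¹ * x * g⁻¹⁻¹) := by group
      rw [this, map_mul, Module.End.mul_apply, h1]
    · intro a ha x hx
      exact ha x hx
    · refine ⟨f, ?_, ?_⟩
      · intro x hx
        rw [hL, conj_eq_iff]
        exact hf x hx
      · rw [hL, Ne, conj_eq_iff]
        exact hfy
  obtain ⟨U, ⟨hUG, hUX, a, haU, hay⟩, hmin⟩ := WellFounded.has_min
    (wellFounded_lt (α := Submodule ℂ (W →ₗ[ℂ] W))) F hF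
  let S : Subrepresentation L := ⟨U, fun g a ha => hUG g a ha⟩
  let σ : Representation ℂ G U := S.toRepresentation
  have hσ : ∀ g (u : U), ((σ g u : U) : W →ₗ[ℂ] W) = L g u := fun g u => rfl
  -- a smaller invariant submodule is pointwise fixed by `y`
  have hsmall : ∀ T : Submodule ℂ (W →ₗ[ℂ] W), (∀ g, ∀ a ∈ T, L g a ∈ T) → T ≤ U → T ≠ U →
      ∀ a ∈ T, L y a = a := by
    intro T h1 h2 h3 a ha
    by_contra h4
    exact hmin T ⟨h1, fun a ha => hUX a (h2 ha), a, ha, h4⟩ (lt_of_le_of_ne h2 h3)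
  have hirr : Representation.IsIrreducible σ := by
    have hnt : Nontrivial (Subrepresentation σ) := by
      refine ⟨⟨⊥, ⊤, fun h => ?_⟩⟩
      have h1 : (⟨a, haU⟩ : U) ∈ (⊥ : Subrepresentation σ) := by
        rw [h]; exact Submodule.mem_top
      have h2 : (⟨a, haU⟩ : U) = 0 := (Submodule.mem_bot ℂ).1 h1
      have h3 : a = 0 := congrArg Subtype.val h2
      apply hay
      rw [h3, map_zero]
    refine ⟨fun T => ?_⟩
    let T' : Submodule ℂ (W →ₗ[ℂ] W) := T.toSubmodule.map U.subtype
    have hT'G : ∀ g, ∀ a ∈ T', L g a ∈ T' := by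
      rintro g _ ⟨u, hu, rfl⟩
      exact ⟨σ g u, T.apply_mem_toSubmodule g hu, rfl⟩
    have hT'U : T' ≤ U := by
      rintro _ ⟨u, hu, rfl⟩
      exact u.2
    obtain ⟨p, hp1, hp2, hp3⟩ := exists_proj L ⊤ T' (fun g _ => hT'G g)
    by_cases h1 : T' = U
    · right
      apply Subrepresentation.toSubmodule_injective
      show T.toSubmodule = ⊤
      rw [eq_top_iff]
      intro u _
      have : (u : W →ₗ[ℂ] W) ∈ T' := by rw [h1]; exact u.2
      obtain ⟨u', hu', h2⟩ := this
      have : u' = u := Subtype.ext h2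
      rwa [← this]
    · left
      have h2 : U ⊓ LinearMap.ker p = U := by
        by_contra h2
        have h3 := hsmall (U ⊓ LinearMap.ker p) (by
          rintro g a ⟨ha, ha'⟩
          refine ⟨hUG g a ha, ?_⟩
          have h4 := LinearMap.congr_fun (hp1 g trivial).eq a
          simp only [Module.End.mul_apply] at h4
          rw [SetLike.mem_coe, LinearMap.mem_ker] at ha' ⊢
          rw [h4, ha', map_zero]) inf_le_left h2
        have h4 := hsmall T' hT'G hT'U h1
        apply hay
        have h5 : a = p a + (a - p a) := by abel
        have h6 : a - p a ∈ U ⊓ LinearMap.ker p := by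
          refine ⟨U.sub_mem haU (hT'U (hp2 a)), ?_⟩
          rw [SetLike.mem_coe, LinearMap.mem_ker, map_sub, hp3 _ (hp2 a), sub_self]
        rw [h5, map_add, h4 _ (hp2 a), h3 _ h6]
      apply Subrepresentation.toSubmodule_injective
      show T.toSubmodule = ⊥
      rw [eq_bot_iff]
      intro u hu
      have h3 : (u : W →ₗ[ℂ] W) ∈ T' := ⟨u, hu, rfl⟩
      have h4 : (u : W →ₗ[ℂ] W) ∈ U ⊓ LinearMap.ker p := by rw [h2]; exact u.2
      have h5 := hp3 _ h3
      rw [LinearMap.mem_ker.1 h4.2] at h5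
      rw [Submodule.mem_bot]
      exact Subtype.ext h5.symm
  have : Invertible (Nat.card G : ℂ) := invertibleOfNonzero (by simp)
  have hchar : (FDRep.of σ).character = σ.character := rfl
  have hWchar : W.character = Representation.character W.ρ := rfl
  refine ⟨FDRep.of σ, ?_, ?_, ?_, ?_⟩
  · rw [FDRep.simple_iff_char_is_norm_one, hchar]
    have h1 := Representation.char_orthonormal σ σ
    rw [if_pos ⟨Representation.Equiv.refl _⟩] at h1
    have h0 : (Nat.card G : ℂ) ≠ 0 := by simp
    field_simp at h1
    simpa using h1
  · have h1 := Representation.card_inv_mul_sum_char_mul_char_eq_finrank σ L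
    have h2 : charInner G (fun g => W.character g * (starRingEnd ℂ) (W.character g))
        (FDRep.of σ).character = Module.finrank ℂ (Representation.IntertwiningMap σ L) := by
      rw [← h1, charInner, hchar, Nat.card_eq_fintype_card]
      congr 1
      refine Finset.sum_congr rfl fun g _ => ?_
      rw [Representation.char_linHom, hWchar]
      have h3 := trace_inv W.ρ g
      have h4 := trace_inv σ g
      simp only [Representation.character]
      rw [h3, h4]
      ring
    rw [h2]
    have : Nontrivial (Representation.IntertwiningMap σ L) := by
      refine ⟨⟨⟨U.subtype, fun g => rfl⟩, 0, fun h => ?_⟩⟩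
      have h5 : U.subtype = 0 := congrArg Representation.IntertwiningMap.toLinearMap h
      have h6 : a = 0 := LinearMap.congr_fun h5 ⟨a, haU⟩
      apply hay
      rw [h6, map_zero]
    exact_mod_cast Module.finrank_pos.ne'
  · intro x hx
    show σ x = 1
    ext1 u
    exact Subtype.ext (hUX u u.2 x hx)
  · intro h
    have h1 : σ y = 1 := h
    have h2 := LinearMap.congr_fun h1 ⟨a, haU⟩
    exact hay (congrArg Subtype.val h2)

theorem rho_eq_one_of_char [Fintype G] (A : FDRep ℂ G) (h : A.character = fun _ => 1) (y : G) :
    A.ρ y = 1 := by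
  have h1 : Module.finrank ℂ A = 1 := by
    have := congrFun h 1
    rw [FDRep.char_one] at this
    exact_mod_cast this
  obtain ⟨c, hc, -⟩ := LinearMap.existsUnique_eq_smul_id_of_finrank_eq_one h1 (A.ρ y)
  have h2 : LinearMap.trace ℂ A (A.ρ y) = 1 := congrFun h y
  have h3 : c = 1 := by
    rw [hc] at h2
    simpa [h1] using h2
  rw [hc, h3, one_smul]
  rfl

theorem Sset_lt [Fintype G] (W : FDRep ℂ G) (X Y : Subgroup G) [hX : X.Normal] (hXY : X ≤ Y)
    (y : G) (hy : y ∈ Y)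
    (f : W →ₗ[ℂ] W) (hf : ∀ x ∈ X, Commute f (W.ρ x)) (hfy : ¬ Commute f (W.ρ y)) :
    (Sset G W.character Y).ncard < (Sset G W.character X).ncard := by
  obtain ⟨A, hA, h1, h2, h3⟩ := exists_simple W X y f hf hfy
  refine Set.ncard_lt_ncard ?_ (Sset_finite _ _)
  refine ⟨Sset_anti _ hXY, fun hsub => ?_⟩
  have hmem : A.character ∈ Sset G W.character X :=
    ⟨A, hA, rfl, fun h => h3 (rho_eq_one_of_char A h y), h1, h2⟩
  obtain ⟨B, hB, hBA, -, -, hBY⟩ := hsub hmem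
  have h4 := irr_orth B A hB hA
  have h5 := irr_orth A A hA hA
  rw [if_pos ⟨CategoryTheory.Iso.refl _⟩] at h5
  rw [hBA, h5] at h4
  split_ifs at h4 with h6
  · obtain ⟨i⟩ := h6
    apply h3
    rw [FDRep.Iso.conj_ρ i, hBY y hy]
    ext v
    simp [LinearEquiv.conj_apply]
  · exact one_ne_zero h4


/-- The subgroup of elements commuting with a given endomorphism. -/
def cen (ρ : G →* (V →ₗ[ℂ] V)) (f : V →ₗ[ℂ] V) : Subgroup G where
  carrier := {g | Commute f (ρ g)}
  one_mem' := by simp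
  mul_mem' := by
    intro a b ha hb
    show Commute f (ρ (a * b))
    rw [map_mul]
    exact Commute.mul_right ha hb
  inv_mem' := by
    intro a ha
    show f * ρ a⁻¹ = ρ a⁻¹ * f
    have h : f * ρ a = ρ a * f := ha
    calc f * ρ a⁻¹ = ρ a⁻¹ * ρ a * f * ρ a⁻¹ := by rw [rho_inv_mul, one_mul]
      _ = ρ a⁻¹ * (ρ a * f) * ρ a⁻¹ := by simp only [mul_assoc]
      _ = ρ a⁻¹ * (f * ρ a) * ρ a⁻¹ := by rw [h]
      _ = ρ a⁻¹ * f * (ρ a * ρ a⁻¹) := by simp only [mul_assoc]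
      _ = ρ a⁻¹ * f := by rw [rho_mul_inv, mul_one]

theorem clo_clo (ρ : G →* (V →ₗ[ℂ] V)) (Y : Subgroup G) : clo ρ (clo ρ Y) ≤ clo ρ Y :=
  fun _ hg f hf => hg f fun _ hy => hy f hf

/-- In a supersolvable group, normal subgroups contain cyclic normal sections. -/
theorem exists_cyclic (hss : IsSupersolvableGroup G) (X D : Subgroup G) [hX : X.Normal]
    [hD : D.Normal] (hDX : ¬ D ≤ X) :
    ∃ y ∈ D, y ∉ X ∧ (X ⊔ Subgroup.zpowers y).Normal := by
  obtain ⟨n, H, hN, -, h0, htop, hcyc⟩ := hss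
  have hex : ∃ i : ℕ, ∃ hi : i < n + 1, ¬ (H ⟨i, hi⟩ ⊓ D ≤ X) := by
    refine ⟨n, Nat.lt_succ_self n, ?_⟩
    have : H ⟨n, Nat.lt_succ_self n⟩ = ⊤ := htop
    rw [this, top_inf_eq]
    exact hDX
  obtain ⟨hi, hiX⟩ := Nat.find_spec hex
  have hmin := fun m => Nat.find_min hex (m := m)
  generalize Nat.find hex = i at hi hiX hmin
  rcases i with _ | j
  · exfalso
    apply hiX
    have : H ⟨0, hi⟩ = ⊥ := h0
    rw [this, bot_inf_eq]
    exact bot_le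
  have hjX : H ⟨j, by omega⟩ ⊓ D ≤ X := by
    by_contra h
    exact hmin j (Nat.lt_succ_self j) ⟨by omega, h⟩
  obtain ⟨g, -, hg⟩ := hcyc ⟨j, by omega⟩
  change H ⟨j + 1, hi⟩ ≤ H ⟨j, by omega⟩ ⊔ Subgroup.zpowers g at hg
  have hNj := hN ⟨j, by omega⟩
  have hNi := hN ⟨j + 1, hi⟩
  generalize H ⟨j + 1, hi⟩ = P at *
  generalize H ⟨j, by omega⟩ = Q at *
  have hle : (P ⊓ D).map (QuotientGroup.mk' Q) ≤ Subgroup.zpowers (QuotientGroup.mk' Q g) := by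
    refine (Subgroup.map_mono (inf_le_left.trans hg)).trans ?_
    rw [Subgroup.map_sup, MonoidHom.map_zpowers, QuotientGroup.map_mk'_self, bot_sup_eq]
  have hc : IsCyclic ((P ⊓ D).map (QuotientGroup.mk' Q)) := Subgroup.isCyclic_of_le hle
  rw [Subgroup.isCyclic_iff_exists_zpowers_eq_top] at hc
  obtain ⟨q, hq⟩ := hc
  have hqm : q ∈ (P ⊓ D).map (QuotientGroup.mk' Q) := by
    rw [← hq]; exact Subgroup.mem_zpowers q
  obtain ⟨d, hd, rfl⟩ := hqm
  have hall : ∀ e ∈ P ⊓ D, ∃ k : ℤ, e * (d ^ k)⁻¹ ∈ X := by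
    intro e he
    have h1 : QuotientGroup.mk' Q e ∈ (P ⊓ D).map (QuotientGroup.mk' Q) := ⟨e, he, rfl⟩
    rw [← hq] at h1
    obtain ⟨k, hk⟩ := h1
    refine ⟨k, hjX ⟨?_, ?_⟩⟩
    · have : QuotientGroup.mk' Q (e * (d ^ k)⁻¹) = 1 := by
        rw [map_mul, map_inv, map_zpow]
        have hk' : QuotientGroup.mk' Q d ^ k = QuotientGroup.mk' Q e := hk
        rw [hk', mul_inv_cancel]
      rw [← MonoidHom.mem_ker, QuotientGroup.ker_mk'] at this
      exact this
    · exact D.mul_mem he.2 (D.inv_mem (D.zpow_mem hd.2 k))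
  have hY : X ⊔ Subgroup.zpowers d = X ⊔ (P ⊓ D) := by
    apply le_antisymm
    · refine sup_le le_sup_left ?_
      rw [Subgroup.zpowers_le]
      exact (le_sup_right : _ ≤ X ⊔ (P ⊓ D)) hd
    · refine sup_le le_sup_left ?_
      intro e he
      obtain ⟨k, hk⟩ := hall e he
      have : e = (e * (d ^ k)⁻¹) * d ^ k := by group
      rw [this]
      exact Subgroup.mul_mem _ ((le_sup_left : X ≤ _) hk)
        ((le_sup_right : Subgroup.zpowers d ≤ _) ⟨k, rfl⟩)
  refine ⟨d, hd.2, ?_, ?_⟩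
  · intro hdX
    apply hiX
    have : Subgroup.zpowers d ≤ X := by rwa [Subgroup.zpowers_le]
    rw [sup_eq_left.2 this] at hY
    rw [hY]
    exact le_sup_right
  · rw [hY]
    infer_instance

theorem commutator_central (X : Subgroup G) [hX : X.Normal] (y : G)
    (hY : (X ⊔ Subgroup.zpowers y).Normal) :
    ∀ w ∈ derivedSeries G 1, y⁻¹ * (w⁻¹ * y * w) ∈ X := by
  let π := QuotientGroup.mk' X
  have hmap : (X ⊔ Subgroup.zpowers y).map π = Subgroup.zpowers (π y) := by
    rw [Subgroup.map_sup, MonoidHom.map_zpowers, QuotientGroup.map_mk'_self, bot_sup_eq]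
  have hconj : ∀ g : G, ∃ n : ℤ, π g * π y * (π g)⁻¹ = π y ^ n := by
    intro g
    have h1 : g * y * g⁻¹ ∈ X ⊔ Subgroup.zpowers y :=
      hY.conj_mem y ((le_sup_right : Subgroup.zpowers y ≤ _) (Subgroup.mem_zpowers y)) g
    have h2 : π (g * y * g⁻¹) ∈ (X ⊔ Subgroup.zpowers y).map π := ⟨_, h1, rfl⟩
    rw [hmap] at h2
    obtain ⟨n, hn⟩ := h2
    exact ⟨n, by rw [← map_inv, ← map_mul, ← map_mul]; exact hn.symm⟩
  have hle : derivedSeries G 1 ≤ (Subgroup.centralizer {π y}).comap π := by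
    rw [derivedSeries_one, commutator_def, Subgroup.commutator_le]
    intro g _ h _
    obtain ⟨n, hn⟩ := hconj g⁻¹
    obtain ⟨m, hm⟩ := hconj h⁻¹
    rw [Subgroup.mem_comap, Subgroup.mem_centralizer_singleton_iff]
    have e3 : π ⁅g, h⁆ = (π h⁻¹ * π g⁻¹)⁻¹ * (π g⁻¹ * π h⁻¹) := by
      rw [commutatorElement_def]; simp only [map_mul, map_inv]; group
    rw [e3]
    generalize π g⁻¹ = p at *
    generalize π h⁻¹ = q at *
    generalize π y = z at *
    have e1 : (p * q) * z * (p * q)⁻¹ = z ^ (n * m) := by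
      calc (p * q) * z * (p * q)⁻¹ = p * (q * z * q⁻¹) * p⁻¹ := by group
        _ = (p * z * p⁻¹) ^ m := by rw [hm, conj_zpow]
        _ = z ^ (n * m) := by rw [hn, zpow_mul]
    have e2 : (q * p) * z * (q * p)⁻¹ = z ^ (n * m) := by
      calc (q * p) * z * (q * p)⁻¹ = q * (p * z * p⁻¹) * q⁻¹ := by group
        _ = (q * z * q⁻¹) ^ n := by rw [hn, conj_zpow]
        _ = z ^ (n * m) := by rw [hm, mul_comm n m, zpow_mul]
    have e4 : ((q * p)⁻¹ * (p * q)) * z = z * ((q * p)⁻¹ * (p * q)) := by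
      calc ((q * p)⁻¹ * (p * q)) * z
          = (q * p)⁻¹ * ((p * q) * z * (p * q)⁻¹) * (p * q) := by group
        _ = (q * p)⁻¹ * ((q * p) * z * (q * p)⁻¹) * (p * q) := by rw [e1, e2]
        _ = z * ((q * p)⁻¹ * (p * q)) := by group
    first
    | exact e4
    | exact e4.symm
  intro w hw
  have h1 := hle hw
  rw [Subgroup.mem_comap, Subgroup.mem_centralizer_singleton_iff] at h1
  have h2 : π (y⁻¹ * (w⁻¹ * y * w)) = 1 := by
    simp only [map_mul, map_inv]
    have : (π y)⁻¹ * ((π w)⁻¹ * π y * π w) = (π y)⁻¹ * ((π w)⁻¹ * (π y * π w)) := by group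
    rw [this]
    first
    | (rw [h1]; group)
    | (rw [← h1]; group)
  rw [← MonoidHom.mem_ker, QuotientGroup.ker_mk'] at h2
  exact h2

theorem step [Fintype G] (hss : IsSupersolvableGroup G) (W : FDRep ℂ G) :
    ∀ (n : ℕ) (X : Subgroup G), X.Normal → clo W.ρ X ≤ X →
      (Sset G W.character X).ncard ≤ n → derivedSeries G (2 * n) ≤ X := by
  intro n
  induction n with
  | zero =>
    intro X hX hcl hn
    intro y _
    by_contra hyX
    have hy : y ∉ clo W.ρ X := fun h => hyX (hcl h)
    rw [mem_clo] at hy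
    push Not at hy
    obtain ⟨f, hf, hfy⟩ := hy
    have := Sset_lt W X ⊤ le_top y trivial f hf hfy
    omega
  | succ m ih =>
    intro X hX hcl hn
    by_contra hD
    obtain ⟨y, hyD, hyX, hY⟩ := exists_cyclic hss X (derivedSeries G (2 * (m + 1))) hD
    have hy : y ∉ clo W.ρ X := fun h => hyX (hcl h)
    rw [mem_clo] at hy
    push Not at hy
    obtain ⟨f, hf, hfy⟩ := hy
    have hle := le_clo W.ρ (X ⊔ Subgroup.zpowers y)
    have hlt := Sset_lt W X (clo W.ρ (X ⊔ Subgroup.zpowers y)) (le_sup_left.trans hle) y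
      (hle ((le_sup_right : Subgroup.zpowers y ≤ _) (Subgroup.mem_zpowers y))) f hf hfy
    have h1 := ih _ (clo_normal W.ρ (X ⊔ Subgroup.zpowers y)) (clo_clo _ _) (by omega)
    apply hfy
    refine key W.ρ X y (derivedSeries G (2 * m + 1)) ?_ ?_ ?_ f hf
    · intro w hw
      exact commutator_central X y hY w (derivedSeries_antitone G (by omega) hw)
    · exact (derivedSeries_antitone G (by omega)).trans h1
    · rw [← derivedSeries_succ]
      exact (le_sup_right : _ ≤ X ⊔ _) hyD

theorem exists_nonscalar [Fintype G] (W : FDRep ℂ G) (hW : CategoryTheory.Simple W)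
    (hdeg : 1 < (W.character 1).re) : ∃ y, y ∉ clo W.ρ ⊥ := by
  by_contra! h
  have h1 : (Representation.linHom W.ρ W.ρ).invariants = ⊤ := by
    rw [eq_top_iff]
    intro f _ g
    show W.ρ g * f * W.ρ g⁻¹ = f
    rw [conj_eq_iff]
    exact h g f (by intro y hy; rw [Subgroup.mem_bot] at hy; subst hy; simp)
  have h2 := (Representation.linHom.invariantsEquivFDRepHom W W).finrank_eq
  rw [FDRep.finrank_hom_simple_simple, if_pos ⟨CategoryTheory.Iso.refl _⟩, h1, finrank_top,
    Module.finrank_linearMap] at h2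
  rw [FDRep.char_one] at hdeg
  have h3 : 1 < Module.finrank ℂ W := by exact_mod_cast hdeg
  nlinarith

theorem final [Fintype G] (hss : IsSupersolvableGroup G) (W : FDRep ℂ G)
    (hW : CategoryTheory.Simple W) (hdeg : 1 < (W.character 1).re)
    (K : Subgroup G) (hK : (K : Set G) = charKer G W.character) :
    derivedSeries G (2 * etaChar G W.character - 1) ≤ K := by
  obtain ⟨y0, hy0⟩ := exists_nonscalar W hW hdeg
  have hn0 := clo_normal W.ρ ⊥
  obtain ⟨y, -, hy, hY⟩ := exists_cyclic hss (clo W.ρ ⊥) ⊤ (fun h => hy0 (h trivial))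
  have hX0 : ∀ x ∈ clo W.ρ ⊥, ∀ f : W →ₗ[ℂ] W, Commute f (W.ρ x) := by
    intro x hx f
    exact hx f (by intro y hy; rw [Subgroup.mem_bot] at hy; subst hy; simp)
  have hy' : y ∉ clo W.ρ (clo W.ρ ⊥) := fun h => hy (clo_clo _ _ h)
  rw [mem_clo] at hy'
  push Not at hy'
  obtain ⟨f, hf, hfy⟩ := hy'
  set Y := clo W.ρ ⊥ ⊔ Subgroup.zpowers y with hYdef
  have hle := le_clo W.ρ Y
  have hyY : y ∈ Y := (le_sup_right : Subgroup.zpowers y ≤ _) (Subgroup.mem_zpowers y)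
  have hlt := Sset_lt W (clo W.ρ ⊥) (clo W.ρ Y) (le_sup_left.trans hle) y (hle hyY) f hf hfy
  have hle2 := Sset_ncard_le W.character (clo W.ρ ⊥)
  have h1 := step hss W (etaChar G W.character - 1) _ (clo_normal W.ρ Y) (clo_clo _ _) (by omega)
  have hcomm : ∀ f : W →ₗ[ℂ] W, Commute f (W.ρ y) → ∀ z ∈ Y, Commute f (W.ρ z) := by
    intro f hf
    have : Y ≤ cen W.ρ f := by
      refine sup_le ?_ ?_
      · intro x hx; exact hX0 x hx f
      · rw [Subgroup.zpowers_le]; exact hf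
    exact this
  have h2 : ⁅clo W.ρ Y, clo W.ρ Y⁆ ≤ K := by
    rw [Subgroup.commutator_le]
    intro g hg h hh
    have e1 : Commute (W.ρ y) (W.ρ g) := hg _ (hcomm _ (Commute.refl _))
    have e2 : Commute (W.ρ g) (W.ρ h) := hh _ (hcomm _ e1.symm)
    have e3 : W.ρ ⁅g, h⁆ = 1 := by
      have : ⁅g, h⁆ = (g * h) * (h * g)⁻¹ := by rw [commutatorElement_def]; group
      rw [this, map_mul]
      have : W.ρ (g * h) = W.ρ (h * g) := by rw [map_mul, map_mul]; exact e2.eq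
      rw [this, rho_mul_inv]
    rw [← SetLike.mem_coe, hK]
    show LinearMap.trace ℂ W (W.ρ ⁅g, h⁆) = LinearMap.trace ℂ W (W.ρ 1)
    rw [e3, map_one W.ρ]
  have h3 : 2 * etaChar G W.character - 1 = 2 * (etaChar G W.character - 1) + 1 := by omega
  rw [h3, derivedSeries_succ]
  exact (Subgroup.commutator_mono h1 h1).trans h2

end DLProof

/-- For supersolvable `G` and `χ ∈ Irr(G)` with `χ(1) > 1`,
`dl(G/Ker χ) ≤ 2·η(χ) - 1`. -/
theorem derivedLength_le_two_eta_sub_one (G : Type) [Group G] [Fintype G]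
    (hss : IsSupersolvableGroup G) (χ : G → ℂ) (hχ : IsIrrChar G χ)
    (hdeg : 1 < (χ 1).re)
    (K : Subgroup G) [K.Normal] (hK : (K : Set G) = charKer G χ) :
    derivedLength (G ⧸ K) ≤ 2 * etaChar G χ - 1 := by
  obtain ⟨W, hW, rfl⟩ := hχ
  have h := DLProof.final hss W hW hdeg K hK
  apply Nat.sInf_le
  show derivedSeries (G ⧸ K) _ = ⊥
  rw [← map_derivedSeries_eq (QuotientGroup.mk'_surjective K), Subgroup.map_eq_bot_iff,
    QuotientGroup.ker_mk']
  exact h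
end

section
/- Let G be a finite solvable group, χ ∈ Irr(G) faithful, and let α_1, …, α_n be the distinct non-principal irreducible constituents of χ·conj(χ). If L is a normal subgroup of G not contained in Ker(α_i) for any i, and N is a normal subgroup of G contained in L with N ≤ Ker(α_j) for some j, then χ_L is irreducible while χ_N is reducible. -/
open scoped Classical BigOperators

open Representation Module ComplexOrder in
lemma aux_conj_char {G V : Type} [Group G] [Fintype G] [AddCommGroup V] [Module ℂ V]
    [FiniteDimensional ℂ V] (ρ : Representation ℂ G V) (g : G) :
    (starRingEnd ℂ) (ρ.character g) = ρ.character g⁻¹ := by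
  classical
  let b := Module.finBasis ℂ V
  let M : G → Matrix (Fin (finrank ℂ V)) (Fin (finrank ℂ V)) ℂ := fun g => LinearMap.toMatrix b b (ρ g)
  have hM : ∀ x y, M (x * y) = M x * M y := by
    intro x y
    simp only [M, map_mul, LinearMap.toMatrix_mul]
  have hM1 : M 1 = 1 := by
    simp only [M, map_one, LinearMap.toMatrix_one]
  have htr : ∀ x, ρ.character x = (M x).trace := by
    intro x
    exact LinearMap.trace_eq_matrix_trace ℂ b (ρ x)
  let P := ∑ x : G, (M x).conjTranspose * M x
  have hP : P.PosDef := by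
    have : P = (M 1).conjTranspose * M 1 + ∑ x ∈ Finset.univ.erase 1, (M x).conjTranspose * M x := by
      simp only [P]
      rw [Finset.add_sum_erase _ (fun x => (M x).conjTranspose * M x) (Finset.mem_univ _)]
    rw [this, hM1]
    refine Matrix.PosDef.add_posSemidef (by simpa using Matrix.PosDef.one) ?_
    exact Matrix.posSemidef_sum _ (fun x _ => Matrix.posSemidef_conjTranspose_mul_self _)
  have hinv : (M g).conjTranspose * P * M g = P := by
    simp only [P, Finset.mul_sum, Finset.sum_mul]
    refine Fintype.sum_bijective (fun x => x * g) (Group.mulRight_bijective g) _ _ ?_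
    intro x
    simp only [hM, Matrix.conjTranspose_mul, Matrix.mul_assoc]
  have hgg : M g * M g⁻¹ = 1 := by rw [← hM, mul_inv_cancel, hM1]
  have h2 : (M g).conjTranspose * P = P * M g⁻¹ := by
    calc (M g).conjTranspose * P = (M g).conjTranspose * P * (M g * M g⁻¹) := by rw [hgg, mul_one]
      _ = (M g).conjTranspose * P * M g * M g⁻¹ := by simp only [Matrix.mul_assoc]
      _ = _ := by rw [hinv]
  have hdet : IsUnit P.det := (Matrix.isUnit_iff_isUnit_det _).1 hP.isUnit
  rw [htr, htr]
  have h3 : M g⁻¹ = P⁻¹ * ((M g).conjTranspose * P) := by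
    rw [h2, ← Matrix.mul_assoc, Matrix.nonsing_inv_mul _ hdet, one_mul]
  rw [h3, Matrix.trace_mul_comm, Matrix.mul_assoc, Matrix.mul_nonsing_inv _ hdet, mul_one,
    Matrix.trace_conjTranspose]
  rfl

open Representation Module in
lemma aux_inner {G V W : Type} [Group G] [Fintype G] [AddCommGroup V] [Module ℂ V]
    [FiniteDimensional ℂ V] [AddCommGroup W] [Module ℂ W]
    [FiniteDimensional ℂ W] (ρ : Representation ℂ G V) (σ : Representation ℂ G W) :
    charInner G σ.character ρ.character = finrank ℂ (IntertwiningMap ρ σ) := by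
  have : Invertible (Nat.card G : ℂ) := invertibleOfNonzero (NeZero.ne (Nat.card G : ℂ))
  rw [← card_inv_mul_sum_char_mul_char_eq_finrank]
  simp only [charInner, aux_conj_char, Nat.card_eq_fintype_card]

open Representation Module in
lemma aux_irr_iff {G V : Type} [Group G] [Fintype G] [AddCommGroup V] [Module ℂ V]
    [FiniteDimensional ℂ V] (ρ : Representation ℂ G V) :
    IsIrrChar G ρ.character ↔ finrank ℂ (IntertwiningMap ρ ρ) = 1 := by
  have hinv : Invertible (Nat.card G : ℂ) := invertibleOfNonzero (NeZero.ne (Nat.card G : ℂ))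
  have key : (∑ g : G, ρ.character g * ρ.character g⁻¹ = Nat.card G) ↔
      finrank ℂ (IntertwiningMap ρ ρ) = 1 := by
    rw [← Nat.cast_inj (R := ℂ), ← card_inv_mul_sum_char_mul_char_eq_finrank, Nat.cast_one,
      inv_mul_eq_one₀ (NeZero.ne (Nat.card G : ℂ)), eq_comm]
  rw [← key]
  constructor
  · rintro ⟨V', hs, hc⟩
    rw [← hc]
    exact (FDRep.simple_iff_char_is_norm_one V').1 hs
  · intro h
    exact ⟨FDRep.of ρ, (FDRep.simple_iff_char_is_norm_one (FDRep.of ρ)).2 h, rfl⟩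

open Representation Module in
lemma aux_exists_rep {G : Type} [Group G] [Fintype G] {χ : G → ℂ} (h : IsIrrChar G χ) :
    ∃ (V : Type) (_ : AddCommGroup V) (_ : Module ℂ V) (_ : FiniteDimensional ℂ V)
      (ρ : Representation ℂ G V), ρ.character = χ := by
  obtain ⟨V, -, hc⟩ := h
  exact ⟨V, inferInstance, inferInstance, inferInstance, V.ρ, hc⟩

open Representation Module in
lemma aux_eq_of_inner {G : Type} [Group G] [Fintype G] {χ ψ : G → ℂ} (h : IsIrrChar G χ)
    (h' : IsIrrChar G ψ) (hne : charInner G χ ψ ≠ 0) : χ = ψ := by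
  have hinv : Invertible (Nat.card G : ℂ) := invertibleOfNonzero (NeZero.ne (Nat.card G : ℂ))
  obtain ⟨V, hV, rfl⟩ := h
  obtain ⟨W, hW, rfl⟩ := h'
  have h1 := FDRep.char_orthonormal V W
  by_cases hn : Nonempty (V ≅ W)
  · exact FDRep.char_iso hn.some
  · rw [if_neg hn] at h1
    exfalso; apply hne
    have h2 : ∀ g, (starRingEnd ℂ) (W.character g) = W.character g⁻¹ :=
      fun g => aux_conj_char (V := W) W.ρ g
    simpa only [charInner, h2, Nat.card_eq_fintype_card, Nat.cast_zero] using h1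

open Representation Module in
/-- every nonzero subrepresentation contains an irreducible one -/
lemma aux_exists_min {G W : Type} [Group G] [AddCommGroup W] [Module ℂ W]
    [FiniteDimensional ℂ W] (σ : Representation ℂ G W) (U : Subrepresentation σ)
    (hU : U.toSubmodule ≠ ⊥) :
    ∃ X : Subrepresentation σ, X.toSubmodule ≤ U.toSubmodule ∧ IsIrreducible X.toRepresentation := by
  classical
  have hex : ∃ n, ∃ X : Subrepresentation σ, X.toSubmodule ≤ U.toSubmodule ∧
      X.toSubmodule ≠ ⊥ ∧ finrank ℂ X.toSubmodule = n := ⟨_, U, le_rfl, hU, rfl⟩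
  obtain ⟨X, hXU, hX, hn⟩ := Nat.find_spec hex
  refine ⟨X, hXU, ?_⟩
  have hnt : Nontrivial (Subrepresentation X.toRepresentation) := by
    refine ⟨⊥, ⊤, fun h => hX ?_⟩
    have h1 : (⊥ : Submodule ℂ X.toSubmodule) = ⊤ := congrArg Subrepresentation.toSubmodule h
    rw [Submodule.eq_bot_iff]
    intro x hx
    have : (⟨x, hx⟩ : X.toSubmodule) ∈ (⊥ : Submodule ℂ X.toSubmodule) := by rw [h1]; trivial
    simpa using this
  refine { eq_bot_or_eq_top := fun Y => ?_ }
  by_contra! hY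
  let Z : Subrepresentation σ := ⟨Y.toSubmodule.map X.toSubmodule.subtype, by
    rintro g _ ⟨y, hy, rfl⟩
    exact ⟨X.toRepresentation g y, Y.apply_mem_toSubmodule g hy, rfl⟩⟩
  have hZX : Z.toSubmodule ≤ X.toSubmodule := Submodule.map_subtype_le _ _
  have hlt : finrank ℂ Z.toSubmodule < finrank ℂ X.toSubmodule := by
    have : finrank ℂ Z.toSubmodule = finrank ℂ Y.toSubmodule :=
      Submodule.finrank_map_subtype_eq _ _
    rw [this]
    refine Submodule.finrank_lt (fun h => hY.2 ?_)
    exact Subrepresentation.toSubmodule_injective h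
  refine Nat.find_min hex (hn ▸ hlt) ⟨Z, hZX.trans hXU, fun h => hY.1 ?_, rfl⟩
  apply Subrepresentation.toSubmodule_injective
  apply Submodule.map_injective_of_injective (Submodule.injective_subtype X.toSubmodule)
  exact h.trans (Submodule.map_bot _).symm

open Representation Module in
lemma aux_exists_ne {G V W : Type} [Group G] [AddCommGroup V] [Module ℂ V]
    [AddCommGroup W] [Module ℂ W] (ρ : Representation ℂ G V) (σ : Representation ℂ G W)
    (h : 0 < finrank ℂ (IntertwiningMap ρ σ)) : ∃ φ : IntertwiningMap ρ σ, φ ≠ 0 := by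
  by_contra! hall
  have : Subsingleton (IntertwiningMap ρ σ) := ⟨fun a b => by rw [hall a, hall b]⟩
  rw [finrank_zero_of_subsingleton] at h
  exact absurd h (by norm_num)

open Representation Module in
lemma aux_end_scalar {G V : Type} [Group G] [Fintype G] [AddCommGroup V] [Module ℂ V]
    [FiniteDimensional ℂ V] (ρ : Representation ℂ G V)
    (h : finrank ℂ (IntertwiningMap ρ ρ) = 1) (f : V →ₗ[ℂ] V)
    (hf : ∀ g v, f (ρ g v) = ρ g (f v)) : ∃ c : ℂ, f = c • LinearMap.id := by
  let I : IntertwiningMap ρ ρ :=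
    (LinearMap.id : V →ₗ[ℂ] V).intertwiningMap_of_isIntertwiningMap ρ ρ (fun _ _ => rfl)
  have hI : I ≠ 0 := by
    intro h0
    have h1 : (LinearMap.id : V →ₗ[ℂ] V) = 0 := congrArg IntertwiningMap.toLinearMap h0
    have : Subsingleton (IntertwiningMap ρ ρ) := by
      refine ⟨fun a b => IntertwiningMap.ext ?_⟩
      ext v
      have hv : v = 0 := congrArg (fun t : V →ₗ[ℂ] V => t v) h1
      simp [hv]
    rw [finrank_zero_of_subsingleton] at h
    exact absurd h (by norm_num)
  obtain ⟨c, hc⟩ := (finrank_eq_one_iff_of_nonzero' I hI).1 h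
    (f.intertwiningMap_of_isIntertwiningMap ρ ρ hf)
  exact ⟨c, (congrArg IntertwiningMap.toLinearMap hc).symm⟩

open Representation Module in
lemma aux_nontrivial {G V : Type} [Group G] [Fintype G] [AddCommGroup V] [Module ℂ V]
    [FiniteDimensional ℂ V] (ρ : Representation ℂ G V)
    (h : finrank ℂ (IntertwiningMap ρ ρ) = 1) : (finrank ℂ V : ℂ) ≠ 0 := by
  intro h0
  have h0' : finrank ℂ V = 0 := by exact_mod_cast h0
  have hs : Subsingleton V := finrank_zero_iff.1 h0'
  have : Subsingleton (IntertwiningMap ρ ρ) := by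
    refine ⟨fun a b => IntertwiningMap.ext ?_⟩
    ext v
    exact Subsingleton.elim _ _
  rw [finrank_zero_of_subsingleton] at h
  exact absurd h (by norm_num)

open Representation Module in
lemma aux_irr_one {G V : Type} [Group G] [Fintype G] [AddCommGroup V] [Module ℂ V]
    [FiniteDimensional ℂ V] (ρ : Representation ℂ G V)
    (h : ∀ f : V →ₗ[ℂ] V, (∀ g v, f (ρ g v) = ρ g (f v)) → ∃ c : ℂ, f = c • LinearMap.id)
    (hV : (finrank ℂ V : ℂ) ≠ 0) : finrank ℂ (IntertwiningMap ρ ρ) = 1 := by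
  let I : IntertwiningMap ρ ρ :=
    (LinearMap.id : V →ₗ[ℂ] V).intertwiningMap_of_isIntertwiningMap ρ ρ (fun _ _ => rfl)
  have hI : I ≠ 0 := by
    intro h0
    have h1 : (LinearMap.id : V →ₗ[ℂ] V) = 0 := congrArg IntertwiningMap.toLinearMap h0
    apply hV
    rw [← LinearMap.trace_id ℂ V, h1, map_zero]
  rw [finrank_eq_one_iff_of_nonzero' I hI]
  intro w
  obtain ⟨c, hc⟩ := h w.toLinearMap (fun g v => IntertwiningMap.isIntertwining _ _ w g v)
  exact ⟨c, IntertwiningMap.ext hc.symm⟩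

open Representation Module in
lemma aux_char_sq {G V : Type} [Group G] [Fintype G] [AddCommGroup V] [Module ℂ V]
    [FiniteDimensional ℂ V] (ρ : Representation ℂ G V) :
    (fun g => ρ.character g * (starRingEnd ℂ) (ρ.character g)) = (linHom ρ ρ).character := by
  ext g
  rw [char_linHom, aux_conj_char, mul_comm]

open Representation Module in
lemma aux_trivial_char {G : Type} [Group G] [Fintype G] :
    (Representation.trivial ℂ G ℂ).character = fun _ => 1 := by
  ext g
  simp [character]

open Representation Module in
lemma aux_irr_trivial {G : Type} [Group G] [Fintype G] : IsIrrChar G (fun _ => 1) := by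
  rw [← aux_trivial_char, aux_irr_iff]
  refine aux_irr_one _ (fun f _ => ⟨f 1, ?_⟩) (by simp)
  ext
  simp

open Representation Module in
/-- Part 1. -/
lemma aux_part_one {G V : Type} [Group G] [Fintype G] [AddCommGroup V] [Module ℂ V]
    [FiniteDimensional ℂ V] (ρ : Representation ℂ G V)
    (h : finrank ℂ (IntertwiningMap ρ ρ) = 1) (L : Subgroup G) [L.Normal]
    (hL : ∀ β : G → ℂ, IsIrrChar G β → β ≠ (fun _ => 1) →
      charInner G (linHom ρ ρ).character β ≠ 0 → ¬ (L : Set G) ⊆ charKer G β) :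
    finrank ℂ (IntertwiningMap (ρ.comp L.subtype) (ρ.comp L.subtype)) = 1 := by
  have hd := aux_nontrivial ρ h
  refine aux_irr_one (G := L) (ρ.comp L.subtype) (fun f hf => ?_) hd
  set c : ℂ := LinearMap.trace ℂ V f / finrank ℂ V with hc
  refine ⟨c, ?_⟩
  by_contra hne
  let U : Subrepresentation (linHom ρ ρ) :=
    { toSubmodule :=
        { carrier := {t : V →ₗ[ℂ] V | LinearMap.trace ℂ V t = 0 ∧
            ∀ l ∈ L, ∀ v, t (ρ l v) = ρ l (t v)}
          zero_mem' := by simp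
          add_mem' := by
            rintro a b ⟨ha, ha'⟩ ⟨hb, hb'⟩
            refine ⟨by rw [map_add, ha, hb, add_zero], fun l hl v => ?_⟩
            simp [ha' l hl, hb' l hl]
          smul_mem' := by
            rintro r a ⟨ha, ha'⟩
            refine ⟨by rw [map_smul, ha, smul_zero], fun l hl v => ?_⟩
            simp [ha' l hl] }
      apply_mem_toSubmodule := by
        rintro g t ⟨ht, ht'⟩
        refine ⟨?_, fun l hl v => ?_⟩
        · have h1 : linHom ρ ρ g t = ρ g * (t * ρ g⁻¹) := rfl
          rw [h1, LinearMap.trace_mul_comm, mul_assoc, ← map_mul, inv_mul_cancel, map_one, mul_one,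
            ht]
        · have h1 : ∀ w, linHom ρ ρ g t w = ρ g (t (ρ g⁻¹ w)) := fun _ => rfl
          have h2 : ρ g⁻¹ (ρ l v) = ρ (g⁻¹ * l * g) (ρ g⁻¹ v) := by
            simp only [← Module.End.mul_apply, ← map_mul]
            congr 2; group
          have hl2 : g⁻¹ * l * g ∈ L := by
            simpa using (inferInstance : L.Normal).conj_mem l hl g⁻¹
          have h3 : ∀ w, ρ g (ρ (g⁻¹ * l * g) w) = ρ l (ρ g w) := by
            intro w
            simp only [← Module.End.mul_apply, ← map_mul]
            congr 2; group
          rw [h1, h1, h2, ht' _ hl2, h3] }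
  have hU : U.toSubmodule ≠ ⊥ := by
    intro hbot
    have hmem : f - c • LinearMap.id ∈ U.toSubmodule := by
      refine ⟨?_, fun l hl v => ?_⟩
      · rw [map_sub, map_smul, LinearMap.trace_id, hc, smul_eq_mul, div_mul_cancel₀ _ hd, sub_self]
      · have := hf ⟨l, hl⟩ v
        simp only [MonoidHom.coe_comp, Function.comp_apply, Subgroup.subtype_apply] at this
        simp [this]
    rw [hbot, Submodule.mem_bot, sub_eq_zero] at hmem
    exact hne hmem
  obtain ⟨X, hXU, hX⟩ := aux_exists_min _ U hU
  have hXfin := IsIrreducible.finrank_intertwiningMap_self X.toRepresentation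
  have hXirr : IsIrrChar G X.toRepresentation.character := (aux_irr_iff _).2 hXfin
  -- the inclusion of `X`
  let inc : IntertwiningMap X.toRepresentation (linHom ρ ρ) :=
    X.toSubmodule.subtype.intertwiningMap_of_isIntertwiningMap _ _ (fun _ _ => rfl)
  have hXd := aux_nontrivial _ hXfin
  have hXnt : Nontrivial X.toSubmodule := by
    have : finrank ℂ X.toSubmodule ≠ 0 := by exact_mod_cast hXd
    exact Module.nontrivial_of_finrank_pos (Nat.pos_of_ne_zero this)
  obtain ⟨x, hx⟩ := exists_ne (0 : X.toSubmodule)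
  refine hL _ hXirr ?_ ?_ ?_
  · intro hβ
    -- `X` would be trivial
    have hne0 : charInner G X.toRepresentation.character
        (Representation.trivial ℂ G ℂ).character ≠ 0 := by
      rw [hβ, aux_trivial_char]
      simp [charInner]
    rw [aux_inner] at hne0
    have hpos : 0 < finrank ℂ (IntertwiningMap (Representation.trivial ℂ G ℂ) X.toRepresentation) :=
      Nat.pos_of_ne_zero (by exact_mod_cast hne0)
    obtain ⟨φ, hφ⟩ := aux_exists_ne _ _ hpos
    have hφ1 : φ 1 ≠ 0 := by
      intro h0
      apply hφ
      apply IntertwiningMap.ext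
      apply LinearMap.ext_ring
      exact h0
    have hinvt : ∀ g, linHom ρ ρ g (φ 1 : V →ₗ[ℂ] V) = (φ 1 : V →ₗ[ℂ] V) := by
      intro g
      have := IntertwiningMap.isIntertwining _ _ φ g 1
      exact (congrArg Subtype.val this).symm
    obtain ⟨a, ha⟩ := aux_end_scalar ρ h (φ 1 : V →ₗ[ℂ] V) (fun g v => by
      have h1 : linHom ρ ρ g (φ 1 : V →ₗ[ℂ] V) (ρ g v) = ρ g ((φ 1 : V →ₗ[ℂ] V) (ρ g⁻¹ (ρ g v))) :=
        rfl
      rw [hinvt g] at h1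
      rw [h1]
      simp [← Module.End.mul_apply, ← map_mul])
    have htr : LinearMap.trace ℂ V (φ 1 : V →ₗ[ℂ] V) = 0 := (hXU (φ 1).2).1
    rw [ha, map_smul, LinearMap.trace_id, smul_eq_mul] at htr
    have ha0 : a = 0 := (mul_eq_zero.1 htr).resolve_right hd
    apply hφ1
    apply Subtype.ext
    rw [ha, ha0, zero_smul]
    rfl
  · rw [aux_inner]
    have : 0 < finrank ℂ (IntertwiningMap X.toRepresentation (linHom ρ ρ)) := by
      have : FiniteDimensional ℂ (IntertwiningMap X.toRepresentation (linHom ρ ρ)) :=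
        Module.Finite.equiv (invariantsEquivIntertwiningMap X.toRepresentation (linHom ρ ρ))
      refine (Module.finrank_pos_iff_exists_ne_zero (R := ℂ)).2 ⟨inc, fun h0 => hx ?_⟩
      apply Subtype.ext
      exact congrArg (fun t : IntertwiningMap X.toRepresentation (linHom ρ ρ) => t x) h0
    exact_mod_cast this.ne'
  · intro l hl
    have h1 : X.toRepresentation l = 1 := by
      ext y : 1
      apply Subtype.ext
      change linHom ρ ρ l (y : V →ₗ[ℂ] V) = (y : V →ₗ[ℂ] V)
      apply LinearMap.ext
      intro v
      change ρ l ((y : V →ₗ[ℂ] V) (ρ l⁻¹ v)) = _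
      rw [← (hXU y.2).2 l hl]
      simp [← Module.End.mul_apply, ← map_mul]
    change X.toRepresentation.character l = X.toRepresentation.character 1
    simp only [character, h1, map_one]

open Representation Module in
/-- Part 2. -/
lemma aux_part_two {G V : Type} [Group G] [Fintype G] [AddCommGroup V] [Module ℂ V]
    [FiniteDimensional ℂ V] (ρ : Representation ℂ G V) (N : Subgroup G)
    (h : finrank ℂ (IntertwiningMap (ρ.comp N.subtype) (ρ.comp N.subtype)) = 1)
    (β : G → ℂ) (hβ : IsIrrChar G β)
    (hc : charInner G (linHom ρ ρ).character β ≠ 0) (hN : (N : Set G) ⊆ charKer G β) :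
    β = fun _ => 1 := by
  obtain ⟨A, _, _, _, σ, rfl⟩ := aux_exists_rep hβ
  have hd := aux_nontrivial (G := N) _ h
  have hinv : Invertible (Nat.card N : ℂ) := invertibleOfNonzero (NeZero.ne (Nat.card N : ℂ))
  -- `N` acts trivially
  have hfull : invariants (σ.comp N.subtype) = ⊤ := by
    apply Submodule.eq_top_of_finrank_eq
    have h1 := card_inv_mul_sum_char_eq_finrank (G := N) (σ.comp N.subtype)
    have h2 : ∀ x : N, character (G := N) (σ.comp N.subtype) x = finrank ℂ A := by
      intro x
      rw [← char_one σ]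
      exact hN x.2
    simp only [h2, Finset.sum_const, Finset.card_univ, nsmul_eq_mul, ← Nat.card_eq_fintype_card]
      at h1
    rw [inv_mul_cancel_left₀ (NeZero.ne (Nat.card N : ℂ))] at h1
    exact_mod_cast h1.symm
  have htriv : ∀ n ∈ N, ∀ a, σ n a = a := by
    intro n hn a
    have ha : a ∈ invariants (σ.comp N.subtype) := by rw [hfull]; trivial
    exact ha ⟨n, hn⟩
  rw [aux_inner] at hc
  have hpos : 0 < finrank ℂ (IntertwiningMap σ (linHom ρ ρ)) :=
    Nat.pos_of_ne_zero (by exact_mod_cast hc)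
  obtain ⟨φ, hφ⟩ := aux_exists_ne _ _ hpos
  let φ' : A →ₗ[ℂ] (V →ₗ[ℂ] V) := φ.toLinearMap
  have hφ' : ∀ g a, φ' (σ g a) = ρ g * (φ' a * ρ g⁻¹) := fun g a => IntertwiningMap.isIntertwining _ _ φ g a
  have hscal : ∀ a, ∃ c : ℂ, φ' a = c • LinearMap.id := by
    intro a
    refine aux_end_scalar (G := N) _ h (φ' a) (fun n v => ?_)
    change φ' a (ρ n v) = ρ n (φ' a v)
    have h1 := hφ' n a
    rw [htriv n n.2] at h1
    conv_lhs => rw [h1]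
    simp only [Module.End.mul_apply]
    simp [← Module.End.mul_apply, ← map_mul]
  let τ : IntertwiningMap σ (Representation.trivial ℂ G ℂ) :=
    (LinearMap.trace ℂ V ∘ₗ φ').intertwiningMap_of_isIntertwiningMap _ _ (fun g a => by
      simp only [LinearMap.comp_apply, hφ']
      rw [LinearMap.trace_mul_comm, mul_assoc, ← map_mul, inv_mul_cancel, map_one, mul_one]
      rfl)
  have hτ : τ ≠ 0 := by
    intro h0
    apply hφ
    apply IntertwiningMap.ext
    apply LinearMap.ext
    intro a
    change φ' a = 0
    obtain ⟨c, hc⟩ := hscal a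
    have h1 : LinearMap.trace ℂ V (φ' a) = 0 :=
      congrArg (fun t : IntertwiningMap σ (Representation.trivial ℂ G ℂ) => t a) h0
    rw [hc, map_smul, LinearMap.trace_id, smul_eq_mul] at h1
    rw [hc, (mul_eq_zero.1 h1).resolve_right hd, zero_smul]
  symm
  apply aux_eq_of_inner aux_irr_trivial hβ
  rw [← aux_trivial_char, aux_inner]
  have : FiniteDimensional ℂ (IntertwiningMap σ (Representation.trivial ℂ G ℂ)) :=
    Module.Finite.equiv (invariantsEquivIntertwiningMap σ (Representation.trivial ℂ G ℂ))
  have := (Module.finrank_pos_iff_exists_ne_zero (R := ℂ)).2 ⟨τ, hτ⟩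
  exact_mod_cast this.ne'

/-- If the normal subgroup `L` lies in no kernel of a non-principal irreducible
constituent of `χ ⬝ conj χ` while the normal subgroup `N ≤ L` lies in some such
kernel, then `χ_L` is irreducible and `χ_N` is reducible. -/
theorem restriction_irr_and_reducible (G : Type) [Group G] [Fintype G]
    (hsolv : IsSolvable G) (χ : G → ℂ) (hχ : IsIrrChar G χ)
    (hfaithful : ∀ g : G, χ g = χ 1 → g = 1)
    (n : ℕ) (α : Fin n → (G → ℂ)) (hinj : Function.Injective α)
    (hirr : ∀ i, IsIrrChar G (α i)) (hnp : ∀ i, α i ≠ fun _ => 1)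
    (hconst : ∀ i, charInner G (fun g => χ g * (starRingEnd ℂ) (χ g)) (α i) ≠ 0)
    (hall : ∀ β : G → ℂ, IsIrrChar G β → β ≠ (fun _ => 1) →
      charInner G (fun g => χ g * (starRingEnd ℂ) (χ g)) β ≠ 0 → ∃ i, β = α i)
    (L : Subgroup G) (hL : L.Normal) (hLker : ∀ i, ¬ ((L : Set G) ⊆ charKer G (α i)))
    (N : Subgroup G) (hNnormal : N.Normal) (hNL : N ≤ L)
    (j : Fin n) (hNker : (N : Set G) ⊆ charKer G (α j)) :
    IsIrrChar ↥L (fun x => χ x) ∧ ¬ IsIrrChar ↥N (fun x => χ x) := by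
  obtain ⟨V, _, _, _, ρ, rfl⟩ := aux_exists_rep hχ
  rw [aux_char_sq] at hconst hall
  have h := (aux_irr_iff ρ).1 hχ
  constructor
  · refine (aux_irr_iff (G := L) (ρ.comp L.subtype)).2 (aux_part_one ρ h L ?_)
    intro β hβ hne hin
    obtain ⟨i, rfl⟩ := hall β hβ hne hin
    exact hLker i
  · intro hN
    have h1 := (aux_irr_iff (G := N) (ρ.comp N.subtype)).1 hN
    exact hnp j (aux_part_two ρ N h1 (α j) (hirr j) (hconst j) hNker)
end
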